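/- Let D, r, m be positive integers and let A be a random D×r real matrix whose entries are independent Gaussian random variables with mean 0 and variance 1/D. Then for all fixed nonzero matrices U, V ∈ ℝ^{r×m} and every t > 0, P( |⟨AU, AV⟩_F − ⟨U, V⟩_F| ≥ t ‖U‖_F ‖V‖_F ) ≤ 2 / (D t²). -/

import Mathlib

open MeasureTheory ProbabilityTheory Matrix
open scoped NNReal

instance matrixMeasurableSpace {m n α : Type*} [MeasurableSpace α] :
    MeasurableSpace (Matrix m n α) :=
  inferInstanceAs (MeasurableSpace (m → n → α))

/-- The product Gaussian measure on `D × r` real matrices whose entries are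
independent Gaussians with mean `0` and variance `1/D`. -/
noncomputable def gaussianMatrix (D r : ℕ) : Measure (Matrix (Fin D) (Fin r) ℝ) :=
  Measure.pi fun _ : Fin D => Measure.pi fun _ : Fin r => gaussianReal 0 (D : ℝ≥0)⁻¹

/-- Frobenius inner product of two real matrices. -/
def frobInner {n m : Type*} [Fintype n] [Fintype m] (X Y : Matrix n m ℝ) : ℝ :=
  ∑ i, ∑ j, X i j * Y i j

/-- Frobenius norm of a real matrix. -/
noncomputable def frobNorm {n m : Type*} [Fintype n] [Fintype m] (X : Matrix n m ℝ) : ℝ :=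
  Real.sqrt (frobInner X X)

lemma gaussian_fourth (w : ℝ≥0) : ∫ x, x ^ 4 ∂(gaussianReal 0 w) = 3 * (w : ℝ) ^ 2 := by
  have h1 : ∫ x, x ^ 4 ∂(gaussianReal 0 w) = iteratedDeriv 4 (mgf (fun x ↦ x) (gaussianReal 0 w)) 0 := by
    rw [iteratedDeriv_mgf_zero] <;> simp
  have hE : ∀ t : ℝ, HasDerivAt (fun t : ℝ ↦ Real.exp (w * t ^ 2 / 2)) (w * t * Real.exp (w * t ^ 2 / 2)) t := by
    intro t
    have := (((hasDerivAt_pow 2 t).const_mul (w : ℝ)).div_const 2).exp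
    refine this.congr_deriv ?_
    simp; ring
  have hd : ∀ (p p' : ℝ → ℝ), (∀ t, HasDerivAt p (p' t) t) →
      deriv (fun t : ℝ ↦ p t * Real.exp (w * t ^ 2 / 2)) =
        fun t ↦ (p' t + p t * (w * t)) * Real.exp (w * t ^ 2 / 2) := by
    intro p p' hp
    ext t
    refine (((hp t).mul (hE t)).congr_deriv ?_).deriv
    ring
  have e0 : deriv (fun t ↦ Real.exp (w * t ^ 2 / 2)) = fun t ↦ (w * t) * Real.exp (w * t ^ 2 / 2) := by
    ext t; rw [(hE t).deriv]
  have i1 : ∀ t : ℝ, HasDerivAt (fun t : ℝ ↦ (w : ℝ) * t) w t := fun t ↦ by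
    simpa using (hasDerivAt_id t).const_mul (w : ℝ)
  have i2 : ∀ t : ℝ, HasDerivAt (fun t : ℝ ↦ (w : ℝ) + (w * t) * (w * t)) (2 * w ^ 2 * t) t := fun t ↦ by
    refine (((i1 t).mul (i1 t)).const_add (w : ℝ)).congr_deriv ?_
    ring
  have i3 : ∀ t : ℝ, HasDerivAt (fun t : ℝ ↦ 2 * (w : ℝ) ^ 2 * t + (w + (w * t) * (w * t)) * (w * t))
      (2 * w ^ 2 + (2 * w ^ 2 * t * (w * t) + (w + (w * t) * (w * t)) * w)) t := fun t ↦ by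
    have := (hasDerivAt_id t).const_mul (2 * (w : ℝ) ^ 2)
    simp only [id, mul_one] at this
    exact this.add ((i2 t).mul (i1 t))
  rw [h1, mgf_fun_id_gaussianReal]
  simp only [zero_mul, zero_add]
  rw [iteratedDeriv_succ, iteratedDeriv_succ, iteratedDeriv_succ, iteratedDeriv_one, e0, hd _ _ i1,
    hd _ _ i2, hd _ _ i3]
  simp
  ring

/-- `f` is integrable with integral `c`. -/
def HasInt {Ω : Type*} [MeasurableSpace Ω] (μ : Measure Ω) (f : Ω → ℝ) (c : ℝ) : Prop :=
  Integrable f μ ∧ ∫ x, f x ∂μ = c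

lemma HasInt.add {Ω : Type*} [MeasurableSpace Ω] {μ : Measure Ω} {f g : Ω → ℝ} {c d : ℝ}
    (hf : HasInt μ f c) (hg : HasInt μ g d) : HasInt μ (fun x ↦ f x + g x) (c + d) :=
  ⟨hf.1.add hg.1, by rw [integral_add hf.1 hg.1, hf.2, hg.2]⟩

lemma HasInt.sub {Ω : Type*} [MeasurableSpace Ω] {μ : Measure Ω} {f g : Ω → ℝ} {c d : ℝ}
    (hf : HasInt μ f c) (hg : HasInt μ g d) : HasInt μ (fun x ↦ f x - g x) (c - d) :=
  ⟨hf.1.sub hg.1, by rw [integral_sub hf.1 hg.1, hf.2, hg.2]⟩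

lemma HasInt.mul {Ω : Type*} [MeasurableSpace Ω] {μ : Measure Ω} {f : Ω → ℝ} {c : ℝ}
    (hf : HasInt μ f c) (k : ℝ) : HasInt μ (fun x ↦ k * f x) (k * c) :=
  ⟨hf.1.const_mul k, by rw [integral_const_mul, hf.2]⟩

lemma HasInt.sum {Ω ι : Type*} [Fintype ι] [MeasurableSpace Ω] {μ : Measure Ω} {f : ι → Ω → ℝ}
    {c : ι → ℝ} (hf : ∀ i, HasInt μ (f i) (c i)) : HasInt μ (fun x ↦ ∑ i, f i x) (∑ i, c i) :=
  ⟨integrable_finsetSum _ fun i _ ↦ (hf i).1, by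
    rw [integral_finsetSum _ fun i _ ↦ (hf i).1]; exact Finset.sum_congr rfl fun i _ ↦ (hf i).2⟩

/-- row measure -/
noncomputable abbrev rowM (r : ℕ) (v : ℝ≥0) : Measure (Fin r → ℝ) :=
  Measure.pi fun _ : Fin r => gaussianReal 0 v

lemma law (r : ℕ) (v : ℝ≥0) (x : Fin r → ℝ) :
    HasLaw (fun a ↦ a ⬝ᵥ x) (gaussianReal 0 (v * (x ⬝ᵥ x).toNNReal)) (rowM r v) := by
  have hi : ∀ i : Fin r, HasLaw (fun a : Fin r → ℝ ↦ a i) (gaussianReal 0 v) (rowM r v) := fun i ↦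
    ⟨(measurable_pi_apply i).aemeasurable, (measurePreserving_eval (fun _ : Fin r ↦ gaussianReal 0 v) i).map_eq⟩
  have hi2 := fun i ↦ gaussianReal_mul_const (hi i) (x i)
  have hg : HasGaussianLaw (fun a : Fin r → ℝ ↦ ∑ i, a i * x i) (rowM r v) := by
    refine iIndepFun.hasGaussianLaw_fun_sum (fun i ↦ (hi2 i).hasGaussianLaw) ?_
    exact iIndepFun_pi (X := fun i (y : ℝ) ↦ y * x i) (fun i ↦ by fun_prop)
  have hm : ∀ i, MemLp (fun y : ℝ ↦ y * x i) 2 (gaussianReal 0 v) := fun i ↦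
    (memLp_id_gaussianReal' 2 (by simp)).mul_const (x i)
  have hmean : ∫ a, ∑ i, a i * x i ∂(rowM r v) = 0 := by
    rw [integral_finsetSum]
    · refine Finset.sum_eq_zero fun i _ ↦ ?_
      rw [(hi2 i).integral_eq]; simp
    · intro i _
      exact ((hm i).comp_measurePreserving (measurePreserving_eval _ i)).integrable (by simp)
  have hvar : Var[fun a ↦ ∑ i, a i * x i; rowM r v] = v * (x ⬝ᵥ x) := by
    have := variance_sum_pi (X := fun i (y : ℝ) ↦ y * x i) hm
    have e : (∑ i, fun ω : Fin r → ℝ ↦ ω i * x i) = fun a ↦ ∑ i, a i * x i := by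
      ext a; simp
    rw [e] at this
    rw [this]
    simp only [variance_mul_const, variance_fun_id_gaussianReal, dotProduct, Finset.mul_sum]
    exact Finset.sum_congr rfl fun i _ ↦ by ring
  refine ⟨hg.aemeasurable, ?_⟩
  have h3 := hg.map_eq_gaussianReal
  rw [hmean, hvar] at h3
  change Measure.map (fun a : Fin r → ℝ ↦ ∑ i, a i * x i) _ = _
  rw [h3, Real.toNNReal_mul (by positivity)]
  simp

lemma dot_self_nonneg {r : ℕ} (x : Fin r → ℝ) : 0 ≤ x ⬝ᵥ x :=
  Finset.sum_nonneg fun i _ ↦ mul_self_nonneg _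

lemma hasInt_two (r : ℕ) (v : ℝ≥0) (x : Fin r → ℝ) :
    HasInt (rowM r v) (fun a ↦ (a ⬝ᵥ x) ^ 2) (v * (x ⬝ᵥ x)) := by
  have hl := law r v x
  have hm : MemLp (fun a ↦ a ⬝ᵥ x) 2 (rowM r v) := hl.hasGaussianLaw.memLp_two
  refine ⟨hm.integrable_sq, ?_⟩
  have := hl.variance_eq
  rw [variance_of_integral_eq_zero hl.aemeasurable (by rw [hl.integral_eq]; simp)] at this
  rw [this]
  simp [dot_self_nonneg x]

lemma hasInt_four (r : ℕ) (v : ℝ≥0) (x : Fin r → ℝ) :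
    HasInt (rowM r v) (fun a ↦ (a ⬝ᵥ x) ^ 4) (3 * (v * (x ⬝ᵥ x)) ^ 2) := by
  have hl := law r v x
  have hm : MemLp (fun a ↦ a ⬝ᵥ x) 4 (rowM r v) := hl.hasGaussianLaw.memLp (by simp)
  constructor
  · have := hm.integrable_norm_pow (p := 4) (by simp)
    refine this.congr (ae_of_all _ fun a ↦ ?_)
    simp [Even.pow_abs (by decide : Even 4)]
  · have := hl.integral_comp (f := fun y : ℝ ↦ y ^ 4) (by fun_prop)
    simp only [Function.comp_def] at this
    rw [this, gaussian_fourth]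
    simp [dot_self_nonneg x]

lemma hasInt_xy (r : ℕ) (v : ℝ≥0) (x y : Fin r → ℝ) :
    HasInt (rowM r v) (fun a ↦ (a ⬝ᵥ x) * (a ⬝ᵥ y)) (v * (x ⬝ᵥ y)) := by
  have := ((hasInt_two r v (x + y)).sub (hasInt_two r v (x - y))).mul (1 / 4)
  convert this using 1
  · ext a; simp only [dotProduct_add, dotProduct_sub]; ring
  · simp only [dotProduct_add, dotProduct_sub, add_dotProduct, sub_dotProduct, dotProduct_comm y x]
    ring

lemma hasInt_xyzw (r : ℕ) (v : ℝ≥0) (x y z w : Fin r → ℝ) :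
    HasInt (rowM r v) (fun a ↦ ((a ⬝ᵥ x) * (a ⬝ᵥ y)) * ((a ⬝ᵥ z) * (a ⬝ᵥ w)))
      (v ^ 2 * ((x ⬝ᵥ y) * (z ⬝ᵥ w) + (x ⬝ᵥ z) * (y ⬝ᵥ w) + (x ⬝ᵥ w) * (y ⬝ᵥ z))) := by
  have h := hasInt_four r v
  have := (((((((((h (x + y + z + w)).sub (h (x - y + z + w))).sub (h (x + y - z + w))).sub
    (h (x + y + z - w))).add (h (x - y - z + w))).add (h (x - y + z - w))).add
    (h (x + y - z - w))).sub (h (x - y - z - w)))).mul (1 / 192)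
  convert this using 1
  · ext a; simp only [dotProduct_add, dotProduct_sub]; ring
  · simp only [dotProduct_add, dotProduct_sub, add_dotProduct, sub_dotProduct, dotProduct_comm y x,
      dotProduct_comm z x, dotProduct_comm w x, dotProduct_comm z y, dotProduct_comm w y,
      dotProduct_comm w z]
    ring

/-- sum form: rows `U j`, `V j`. -/
lemma hasInt_q (r m : ℕ) (v : ℝ≥0) (U V : Fin m → Fin r → ℝ) :
    HasInt (rowM r v) (fun a ↦ ∑ j, (a ⬝ᵥ U j) * (a ⬝ᵥ V j)) (v * ∑ j, U j ⬝ᵥ V j) := by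
  have := HasInt.sum fun j ↦ hasInt_xy r v (U j) (V j)
  rwa [← Finset.mul_sum] at this

lemma cs {r : ℕ} (x y : Fin r → ℝ) : |x ⬝ᵥ y| ≤ √(x ⬝ᵥ x) * √(y ⬝ᵥ y) := by
  rw [← Real.sqrt_mul (dot_self_nonneg x)]
  apply Real.abs_le_sqrt
  have := Finset.sum_mul_sq_le_sq_mul_sq Finset.univ x y
  simpa [dotProduct, sq] using this

lemma q_var (r m : ℕ) (v : ℝ≥0) (U V : Fin m → Fin r → ℝ) :
    MemLp (fun a ↦ ∑ j, (a ⬝ᵥ U j) * (a ⬝ᵥ V j)) 2 (rowM r v) ∧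
    Var[fun a ↦ ∑ j, (a ⬝ᵥ U j) * (a ⬝ᵥ V j); rowM r v] ≤
      2 * v ^ 2 * ((∑ j, U j ⬝ᵥ U j) * (∑ j, V j ⬝ᵥ V j)) := by
  have h1 := hasInt_q r m v U V
  have h2 := HasInt.sum fun i ↦ HasInt.sum fun j ↦ hasInt_xyzw r v (U i) (V i) (U j) (V j)
  have e : (fun a ↦ ∑ i, ∑ j, ((a ⬝ᵥ U i) * (a ⬝ᵥ V i)) * ((a ⬝ᵥ U j) * (a ⬝ᵥ V j))) =
      (fun a ↦ (∑ j, (a ⬝ᵥ U j) * (a ⬝ᵥ V j)) ^ 2) := by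
    ext a; rw [sq, Finset.sum_mul_sum]
  rw [e] at h2
  have hm : MemLp (fun a ↦ ∑ j, (a ⬝ᵥ U j) * (a ⬝ᵥ V j)) 2 (rowM r v) :=
    (memLp_two_iff_integrable_sq h1.1.aestronglyMeasurable).2 h2.1
  refine ⟨hm, ?_⟩
  rw [variance_eq_sub hm]
  have h2' := h2.2
  simp only [Pi.pow_apply]
  rw [h2.2, h1.2]
  have key : (∑ j, √(U j ⬝ᵥ U j) * √(V j ⬝ᵥ V j)) ^ 2 ≤
      (∑ j, U j ⬝ᵥ U j) * (∑ j, V j ⬝ᵥ V j) := by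
    have := Finset.sum_mul_sq_le_sq_mul_sq Finset.univ (fun j ↦ √(U j ⬝ᵥ U j))
      (fun j ↦ √(V j ⬝ᵥ V j))
    simpa [Real.sq_sqrt, dot_self_nonneg] using this
  have e2 : (v * ∑ j, U j ⬝ᵥ V j : ℝ) ^ 2 = ∑ i, ∑ j, (v : ℝ) ^ 2 * ((U i ⬝ᵥ V i) * (U j ⬝ᵥ V j)) := by
    simp only [← Finset.mul_sum]
    rw [mul_pow, sq (∑ j, _), Finset.sum_mul_sum]
    simp only [← Finset.mul_sum]
  rw [e2, ← Finset.sum_sub_distrib]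
  simp only [← Finset.sum_sub_distrib]
  calc _ ≤ ∑ i, ∑ j, 2 * (v : ℝ) ^ 2 * ((√(U i ⬝ᵥ U i) * √(V i ⬝ᵥ V i)) *
        (√(U j ⬝ᵥ U j) * √(V j ⬝ᵥ V j))) := by
        refine Finset.sum_le_sum fun i _ ↦ Finset.sum_le_sum fun j _ ↦ ?_
        have b : ∀ p q s t : Fin r → ℝ, (p ⬝ᵥ q) * (s ⬝ᵥ t) ≤
            (√(p ⬝ᵥ p) * √(q ⬝ᵥ q)) * (√(s ⬝ᵥ s) * √(t ⬝ᵥ t)) := fun p q s t ↦ by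
          refine (le_abs_self _).trans ?_
          rw [abs_mul]
          exact mul_le_mul (cs p q) (cs s t) (abs_nonneg _) (by positivity)
        have b1 := b (U i) (U j) (V i) (V j)
        have b2 := b (U i) (V j) (V i) (U j)
        have := mul_le_mul_of_nonneg_left (add_le_add b1 b2) (sq_nonneg (v : ℝ))
        linarith
    _ = 2 * (v : ℝ) ^ 2 * (∑ j, √(U j ⬝ᵥ U j) * √(V j ⬝ᵥ V j)) ^ 2 := by
        rw [sq (∑ j, _), Finset.sum_mul_sum]
        simp only [← Finset.mul_sum]
    _ ≤ _ := by gcongr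

theorem stmt8 (D r m : ℕ) (hD : 0 < D) (hr : 0 < r) (hm : 0 < m)
    (U V : Matrix (Fin r) (Fin m) ℝ) (hU : U ≠ 0) (hV : V ≠ 0)
    (t : ℝ) (ht : 0 < t) :
    gaussianMatrix D r
        {A : Matrix (Fin D) (Fin r) ℝ |
          t * (frobNorm U * frobNorm V) ≤ |frobInner (A * U) (A * V) - frobInner U V|} ≤
      ENNReal.ofReal (2 / (D * t ^ 2)) := by
  have hD' : (D : ℝ) ≠ 0 := by positivity
  have hpos : ∀ W : Matrix (Fin r) (Fin m) ℝ, W ≠ 0 → 0 < frobInner W W := by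
    intro W hW
    by_contra h
    have h0 : ∀ i, 0 ≤ ∑ j, W i j * W i j := fun i ↦ Finset.sum_nonneg fun j _ ↦ mul_self_nonneg _
    have hz : frobInner W W = 0 := le_antisymm (not_lt.1 h) (Finset.sum_nonneg fun i _ ↦ h0 i)
    apply hW
    ext i j
    have a := (Finset.sum_eq_zero_iff_of_nonneg fun i _ ↦ h0 i).1 hz i (Finset.mem_univ _)
    have b := (Finset.sum_eq_zero_iff_of_nonneg fun j _ ↦ mul_self_nonneg _).1 a j (Finset.mem_univ _)
    simpa using b
  have hfi : ∀ X Y : Matrix (Fin r) (Fin m) ℝ, frobInner X Y = ∑ j, Xᵀ j ⬝ᵥ Yᵀ j := fun X Y ↦ by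
    simp only [frobInner, dotProduct, transpose_apply]
    exact Finset.sum_comm
  set q : (Fin r → ℝ) → ℝ := fun a ↦ ∑ j, (a ⬝ᵥ Uᵀ j) * (a ⬝ᵥ Vᵀ j) with hq
  set v : ℝ≥0 := (D : ℝ≥0)⁻¹ with hv
  obtain ⟨hqm, hqv⟩ := q_var r m v Uᵀ Vᵀ
  obtain ⟨hqi, hqe⟩ := hasInt_q r m v Uᵀ Vᵀ
  rw [← hfi, ← hfi] at hqv
  rw [← hfi] at hqe
  let X : (Fin D → Fin r → ℝ) → ℝ := ∑ i, fun A ↦ q (A i)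
  let μ : Measure (Fin D → Fin r → ℝ) := Measure.pi fun _ : Fin D ↦ rowM r v
  have hX : ∀ A, X A = ∑ i, q (A i) := fun A ↦ by simp [X]
  have hXi : ∀ i : Fin D, MemLp (fun A : Fin D → Fin r → ℝ ↦ q (A i)) 2 μ := fun i ↦
    hqm.comp_measurePreserving (measurePreserving_eval (fun _ : Fin D ↦ rowM r v) i)
  have hXm : MemLp X 2 μ := memLp_finsetSum' _ fun i _ ↦ hXi i
  have hXv : Var[X; μ] ≤ 2 / D * (frobInner U U * frobInner V V) := by
    have := variance_sum_pi (μ := fun _ : Fin D ↦ rowM r v) (X := fun _ ↦ q) (fun _ ↦ hqm)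
    change Var[X; μ] = _ at this
    rw [this]
    simp only [Finset.sum_const, Finset.card_univ, Fintype.card_fin, nsmul_eq_mul]
    calc _ ≤ (D : ℝ) * (2 * v ^ 2 * (frobInner U U * frobInner V V)) := by gcongr
      _ = _ := by simp only [hv, NNReal.coe_inv, NNReal.coe_natCast]; field_simp
  have hXe : ∫ A, X A ∂μ = frobInner U V := by
    simp only [hX]
    rw [integral_finsetSum _ fun i _ ↦ (hXi i).integrable (by simp)]
    have : ∀ i : Fin D, ∫ A : Fin D → Fin r → ℝ, q (A i) ∂μ = v * frobInner U V := fun i ↦ by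
      rw [← hqe]
      exact integral_comp_eval (μ := fun _ : Fin D ↦ rowM r v) (f := q) hqm.aestronglyMeasurable
    simp only [this, Finset.sum_const, Finset.card_univ, Fintype.card_fin, nsmul_eq_mul, hv,
      NNReal.coe_inv, NNReal.coe_natCast]
    field_simp
  have hU' := hpos U hU
  have hV' := hpos V hV
  have hc : 0 < t * (frobNorm U * frobNorm V) := by
    unfold frobNorm; positivity
  have hch := meas_ge_le_variance_div_sq hXm hc
  rw [hXe] at hch
  have hset : ∀ A : Matrix (Fin D) (Fin r) ℝ, frobInner (A * U) (A * V) = X A := fun A ↦ by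
    exact (hX A).symm
  simp only [hset]
  refine le_trans hch (ENNReal.ofReal_le_ofReal ?_)
  have e : (t * (frobNorm U * frobNorm V)) ^ 2 = t ^ 2 * (frobInner U U * frobInner V V) := by
    unfold frobNorm
    rw [mul_pow, mul_pow, Real.sq_sqrt hU'.le, Real.sq_sqrt hV'.le]
  rw [e, div_le_iff₀ (by positivity)]
  refine hXv.trans (le_of_eq ?_)
  field_simp
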